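/- Let q ∈ [1,∞] with dual exponent q* (1/q + 1/q* = 1). For all positive semidefinite matrices A, B ∈ ℝ^{n×n}, ‖A + B‖_{q→q*} ≥ ‖A‖_{q→q*}. That is, the (q→q*) operator norm is a monotone matrix norm. -/

import Mathlib

open scoped BigOperators ENNReal
open Matrix

/-- The `ℓ_q` norm of a real vector, for `q ∈ [1,∞]` given as an extended nonnegative real
(`q = ⊤` is the max/sup norm). -/
noncomputable def vecNorm {ι : Type*} [Fintype ι] (q : ℝ≥0∞) (v : ι → ℝ) : ℝ :=
  if q = ⊤ then ⨆ i, |v i| else (∑ i, |v i| ^ q.toReal) ^ (1 / q.toReal)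

/-- The `q → p` operator norm of a real matrix:
`‖M‖_{q→p} = sup { ‖Mx‖_p : ‖x‖_q ≤ 1 }`. -/
noncomputable def opNorm {ι₁ ι₂ : Type*} [Fintype ι₁] [Fintype ι₂] (q p : ℝ≥0∞)
    (M : Matrix ι₁ ι₂ ℝ) : ℝ :=
  sSup {y : ℝ | ∃ x : ι₂ → ℝ, vecNorm q x ≤ 1 ∧ y = vecNorm p (M.mulVec x)}

/-- The squared Frobenius norm of a real matrix. -/
noncomputable def frobSq {ι₁ ι₂ : Type*} [Fintype ι₁] [Fintype ι₂] (M : Matrix ι₁ ι₂ ℝ) : ℝ :=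
  ∑ i, ∑ j, (M i j) ^ 2

theorem vecNorm_coord {n : ℕ} (q : ℝ≥0∞) (hq : 1 ≤ q) (x : Fin n → ℝ) (i : Fin n) :
    |x i| ≤ vecNorm q x := by
  unfold vecNorm
  split_ifs with h
  · exact le_ciSup (f := fun i => |x i|) (Set.finite_range _).bddAbove i
  · have hp : 0 < q.toReal := ENNReal.toReal_pos (by positivity) h
    have h1 : |x i| ^ q.toReal ≤ ∑ j, |x j| ^ q.toReal :=
      Finset.single_le_sum (f := fun j => |x j| ^ q.toReal)
        (fun j _ => by positivity) (Finset.mem_univ i)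
    calc |x i| = (|x i| ^ q.toReal) ^ (1 / q.toReal) := by
          rw [← Real.rpow_mul (abs_nonneg _), mul_one_div_cancel hp.ne', Real.rpow_one]
      _ ≤ _ := Real.rpow_le_rpow (by positivity) h1 (by positivity)

theorem vecNorm_nonneg' {n : ℕ} (q : ℝ≥0∞) (x : Fin n → ℝ) : 0 ≤ vecNorm q x := by
  unfold vecNorm
  split_ifs with h
  · exact Real.iSup_nonneg fun i => abs_nonneg _
  · positivity

theorem vecNorm_one' {n : ℕ} (x : Fin n → ℝ) : vecNorm 1 x = ∑ i, |x i| := by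
  simp [vecNorm]

theorem dual_cases (q qs : ℝ≥0∞) (hdual : 1 / q + 1 / qs = 1) :
    (q = 1 ∧ qs = ⊤) ∨ (q = ⊤ ∧ qs = 1) ∨
      (q ≠ ⊤ ∧ qs ≠ ⊤ ∧ q.toReal.HolderConjugate qs.toReal) := by
  simp only [one_div] at hdual
  by_cases h1 : q = ⊤
  · subst h1
    right; left
    simpa using hdual
  by_cases h2 : qs = ⊤
  · subst h2
    left
    simpa using hdual
  right; right
  have hc : q.HolderConjugate qs := ENNReal.holderConjugate_iff.2 hdual
  refine ⟨h1, h2, ?_⟩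
  have hq0 : q ≠ 0 := by rintro rfl; simp at hdual
  have hs0 : qs ≠ 0 := by rintro rfl; simp at hdual
  have h := congrArg ENNReal.toReal hdual
  rw [ENNReal.toReal_add (by simpa using hq0) (by simpa using hs0)] at h
  simp only [ENNReal.toReal_inv, ENNReal.toReal_one] at h
  have hp := ENNReal.toReal_pos hq0 h1
  have hp' := ENNReal.toReal_pos hs0 h2
  rw [Real.holderConjugate_iff]
  refine ⟨?_, h⟩
  have : 0 < qs.toReal⁻¹ := by positivity
  have h3 : q.toReal⁻¹ < 1 := by linarith
  exact (inv_lt_one₀ hp).1 h3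

theorem holder_top {n : ℕ} (x y : Fin n → ℝ) :
    x ⬝ᵥ y ≤ vecNorm 1 x * vecNorm ⊤ y := by
  rw [vecNorm_one', Finset.sum_mul]
  refine Finset.sum_le_sum fun i _ => ?_
  calc x i * y i ≤ |x i| * |y i| := by rw [← abs_mul]; exact le_abs_self _
    _ ≤ _ := mul_le_mul_of_nonneg_left (vecNorm_coord ⊤ le_top y i) (abs_nonneg _)

theorem vecNorm_holder {n : ℕ} (q qs : ℝ≥0∞) (hdual : 1 / q + 1 / qs = 1)
    (x y : Fin n → ℝ) : x ⬝ᵥ y ≤ vecNorm q x * vecNorm qs y := by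
  rcases dual_cases q qs hdual with ⟨rfl, rfl⟩ | ⟨rfl, rfl⟩ | ⟨h1, h2, h⟩
  · exact holder_top x y
  · rw [dotProduct_comm, mul_comm]; exact holder_top y x
  · unfold vecNorm
    rw [if_neg h1, if_neg h2]
    exact Real.inner_le_Lp_mul_Lq Finset.univ x y h

theorem abs_sign_le (a : ℝ) : |(SignType.sign a : ℝ)| ≤ 1 := by
  rcases lt_trichotomy a 0 with h | h | h <;> simp [h]

theorem vecNorm_witness {n : ℕ} (q qs : ℝ≥0∞) (hdual : 1 / q + 1 / qs = 1)
    (v : Fin n → ℝ) : ∃ y, vecNorm q y ≤ 1 ∧ y ⬝ᵥ v = vecNorm qs v := by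
  rcases dual_cases q qs hdual with ⟨rfl, rfl⟩ | ⟨rfl, rfl⟩ | ⟨h1, h2, h⟩
  · rcases isEmpty_or_nonempty (Fin n) with hn | hn
    · exact ⟨0, by simp [vecNorm_one'], by simp [vecNorm]⟩
    · obtain ⟨i, hi⟩ := exists_eq_ciSup_of_finite (f := fun i => |v i|)
      refine ⟨Pi.single i (SignType.sign (v i) : ℝ), ?_, ?_⟩
      · rw [vecNorm_one', Finset.sum_eq_single i]
        · simpa using abs_sign_le (v i)
        · intro j _ hj; simp [hj]
        · simp
      · simp only [vecNorm, if_true, single_dotProduct]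
        rw [← hi, sign_mul_self]
  · refine ⟨fun i => (SignType.sign (v i) : ℝ), ?_, ?_⟩
    · simp only [vecNorm, if_true]
      exact Real.iSup_le (fun i => abs_sign_le _) zero_le_one
    · rw [vecNorm_one']
      exact Finset.sum_congr rfl fun i _ => sign_mul_self _
  · obtain ⟨⟨g, hg, hg'⟩, -⟩ :=
      NNReal.isGreatest_Lp Finset.univ (fun i => Real.nnabs (v i)) h.symm
    refine ⟨fun i => (SignType.sign (v i) : ℝ) * g i, ?_, ?_⟩
    · unfold vecNorm
      rw [if_neg h1]
      have hg2 : ∑ i, (g i : ℝ) ^ q.toReal ≤ 1 := by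
        have : ((∑ i, g i ^ q.toReal : NNReal) : ℝ) ≤ 1 := by exact_mod_cast hg
        simpa using this
      refine Real.rpow_le_one (by positivity) (le_trans ?_ hg2) (by positivity)
      refine Finset.sum_le_sum fun i _ => ?_
      refine Real.rpow_le_rpow (abs_nonneg _) ?_ (by positivity)
      rw [abs_mul, abs_of_nonneg (g i).coe_nonneg]
      exact mul_le_of_le_one_left (g i).2 (abs_sign_le _)
    · unfold vecNorm
      rw [if_neg h2]
      have h3 := congrArg (fun t : NNReal => (t : ℝ)) hg'
      simp only [NNReal.coe_rpow, NNReal.coe_sum, NNReal.coe_mul, Real.coe_nnabs] at h3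
      rw [← h3]
      refine Finset.sum_congr rfl fun i _ => ?_
      rw [mul_right_comm, sign_mul_self]

theorem opNorm_bdd {n : ℕ} (q qs : ℝ≥0∞) (hq : 1 ≤ q) (hdual : 1 / q + 1 / qs = 1)
    (M : Matrix (Fin n) (Fin n) ℝ) :
    BddAbove {y : ℝ | ∃ x : Fin n → ℝ, vecNorm q x ≤ 1 ∧ y = vecNorm qs (M.mulVec x)} := by
  refine ⟨∑ i, ∑ j, |M i j|, ?_⟩
  rintro _ ⟨x, hx, rfl⟩
  obtain ⟨y, hy, hyx⟩ := vecNorm_witness q qs hdual (M.mulVec x)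
  rw [← hyx]
  refine Finset.sum_le_sum fun i _ => ?_
  have hyi := (vecNorm_coord q hq y i).trans hy
  have h1 : |(M *ᵥ x) i| ≤ ∑ j, |M i j| := by
    refine (Finset.abs_sum_le_sum_abs (fun j => M i j * x j) Finset.univ).trans (Finset.sum_le_sum fun j _ => ?_)
    rw [abs_mul]
    exact mul_le_of_le_one_right (abs_nonneg _) ((vecNorm_coord q hq x j).trans hx)
  calc y i * (M *ᵥ x) i ≤ |y i| * |(M *ᵥ x) i| := by rw [← abs_mul]; exact le_abs_self _
    _ ≤ |(M *ᵥ x) i| := mul_le_of_le_one_left (abs_nonneg _) hyi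
    _ ≤ _ := h1

/-- For `q ∈ [1,∞]` with dual exponent `q*` (`1/q + 1/q* = 1` in `ℝ≥0∞`), the
`q → q*` operator norm is monotone: for all PSD matrices `A, B`,
`‖A + B‖_{q→q*} ≥ ‖A‖_{q→q*}`. -/
theorem qqstar_norm_monotone {n : ℕ} (q qs : ℝ≥0∞) (hq : 1 ≤ q)
    (hdual : 1 / q + 1 / qs = 1)
    (A B : Matrix (Fin n) (Fin n) ℝ) (hA : A.PosSemidef) (hB : B.PosSemidef) :
    opNorm q qs A ≤ opNorm q qs (A + B) := by
  have hzero : vecNorm q (0 : Fin n → ℝ) ≤ 1 := by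
    obtain ⟨y, hy, -⟩ := vecNorm_witness q qs hdual (0 : Fin n → ℝ)
    refine le_trans ?_ hy
    unfold vecNorm
    split_ifs with h
    · simpa using Real.iSup_nonneg fun i => abs_nonneg (y i)
    · have hp : 0 < q.toReal := ENNReal.toReal_pos (by positivity) h
      simp only [Pi.zero_apply, abs_zero, Real.zero_rpow hp.ne', Finset.sum_const_zero]
      rw [Real.zero_rpow (by positivity)]
      positivity
  have key : ∀ z : Fin n → ℝ, vecNorm q z ≤ 1 → z ⬝ᵥ (A *ᵥ z) ≤ opNorm q qs (A + B) := by
    intro z hz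
    have hb : 0 ≤ z ⬝ᵥ (B *ᵥ z) := by simpa using hB.dotProduct_mulVec_nonneg z
    have h1 := vecNorm_holder q qs hdual z ((A + B) *ᵥ z)
    have h2 : vecNorm qs ((A + B) *ᵥ z) ≤ opNorm q qs (A + B) :=
      le_csSup (opNorm_bdd q qs hq hdual (A + B)) ⟨z, hz, rfl⟩
    have h3 := mul_le_of_le_one_left (vecNorm_nonneg' qs ((A + B) *ᵥ z)) hz
    rw [add_mulVec, dotProduct_add] at h1
    rw [add_mulVec] at h2 h3
    linarith
  refine csSup_le ⟨_, 0, hzero, rfl⟩ ?_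
  rintro _ ⟨x, hx, rfl⟩
  obtain ⟨y, hy, hyx⟩ := vecNorm_witness q qs hdual (A *ᵥ x)
  rw [← hyx]
  have hp : 0 ≤ (x - y) ⬝ᵥ (A *ᵥ (x - y)) := by
    simpa using hA.dotProduct_mulVec_nonneg (x - y)
  have hsym : x ⬝ᵥ (A *ᵥ y) = y ⬝ᵥ (A *ᵥ x) := by
    have hT : Aᵀ = A := by simpa using hA.isHermitian.eq
    rw [dotProduct_mulVec, ← mulVec_transpose, hT, dotProduct_comm]
  rw [mulVec_sub, sub_dotProduct, dotProduct_sub, dotProduct_sub, hsym] at hp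
  have := key x hx
  have := key y hy
  linarith
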